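/- Stochastic stability: suppose each IFSm (X, τ, q^(n)) satisfies M1 (constant s), H2 (constant r), H3 (constant t) with s + r·t < 1, and q^(n)_x → q*_x in d_MK uniformly in x. Let μ^(n) be the unique invariant measure of the Markov operator T_{q^(n)}. Then (X, τ, q*) has a unique invariant measure μ*, and d_MK(μ^(n), μ*) → 0; moreover if d_MK(q^(n)_x, q*_x) < ε for all x then d_MK(μ^(n), μ*) ≤ r ε / (1 − (r t + s)). -/

import Mathlib

open MeasureTheory Filter

/-- The Monge–Kantorovich (Wasserstein-1) distance. -/
noncomputable def dMK {α : Type*} [MetricSpace α] [MeasurableSpace α]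
    (μ ν : Measure α) : ℝ :=
  ⨆ f : {f : α → ℝ // LipschitzWith 1 f}, (∫ z, f.1 z ∂μ - ∫ z, f.1 z ∂ν)

/-- The Markov operator of an IFSm. -/
noncomputable def markovOp {X Λ : Type*} [MeasurableSpace X] [MeasurableSpace Λ]
    (τ : Λ → X → X) (q : X → Measure Λ) : Measure X → Measure X :=
  fun μ => μ.bind fun x => (q x).map fun l => τ l x

theorem aux_lip {α : Type*} [MetricSpace α] {f : α → ℝ} {K : ℝ} (hK : 0 ≤ K)
    (h : ∀ x y, f x - f y ≤ K * dist x y) : LipschitzWith ⟨K, hK⟩ f :=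
  LipschitzWith.of_le_add_mul _ fun x y => by
    have := h x y
    show f x ≤ f y + K * dist x y
    linarith

theorem aux_int {α : Type*} [MetricSpace α] [CompactSpace α] [MeasurableSpace α] [BorelSpace α]
    (μ : Measure α) [IsProbabilityMeasure μ] {f : α → ℝ} (hf : Continuous f) : Integrable f μ :=
  hf.integrable_of_hasCompactSupport (HasCompactSupport.of_compactSpace f)

theorem aux_bdd {α : Type*} [MetricSpace α] [CompactSpace α] [MeasurableSpace α] [BorelSpace α]
    (μ ν : Measure α) [IsProbabilityMeasure μ] [IsProbabilityMeasure ν] :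
    BddAbove (Set.range fun f : {f : α → ℝ // LipschitzWith 1 f} =>
      (∫ z, f.1 z ∂μ - ∫ z, f.1 z ∂ν)) := by
  obtain ⟨a⟩ : Nonempty α := nonempty_of_isProbabilityMeasure μ
  refine ⟨2 * Metric.diam (Set.univ : Set α), ?_⟩
  rintro _ ⟨⟨f, hf⟩, rfl⟩
  have hb : ∀ z, |f z - f a| ≤ Metric.diam (Set.univ : Set α) := fun z => by
    have h1 := hf.dist_le_mul z a
    rw [Real.dist_eq] at h1
    have h2 := Metric.dist_le_diam_of_mem (isCompact_univ (X := α)).isBounded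
      (Set.mem_univ z) (Set.mem_univ a)
    simp at h1
    linarith
  have h1 : ∫ z, f z ∂μ ≤ ∫ z, (f a + Metric.diam (Set.univ : Set α)) ∂μ :=
    integral_mono (aux_int μ hf.continuous) (integrable_const _) fun z => by
      have := abs_le.1 (hb z)
      show f z ≤ _
      linarith
  have h2 : ∫ z, (f a - Metric.diam (Set.univ : Set α)) ∂ν ≤ ∫ z, f z ∂ν :=
    integral_mono (integrable_const _) (aux_int ν hf.continuous) fun z => by
      have := abs_le.1 (hb z)
      show _ ≤ f z
      linarith
  simp at h1 h2
  show ∫ z, f z ∂μ - ∫ z, f z ∂ν ≤ _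
  linarith

theorem aux_le {α : Type*} [MetricSpace α] [CompactSpace α] [MeasurableSpace α] [BorelSpace α]
    (μ ν : Measure α) [IsProbabilityMeasure μ] [IsProbabilityMeasure ν] {f : α → ℝ} {K : ℝ}
    (hK : 0 ≤ K) (h : ∀ x y, f x - f y ≤ K * dist x y) :
    ∫ z, f z ∂μ - ∫ z, f z ∂ν ≤ K * dMK μ ν := by
  obtain ⟨a⟩ : Nonempty α := nonempty_of_isProbabilityMeasure μ
  rcases hK.eq_or_lt with rfl | hK'
  · have : f = fun _ => f a := by
      funext z
      have h1 := h z a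
      have h2 := h a z
      linarith
    rw [this]
    simp
  · have hg : LipschitzWith 1 (fun z => K⁻¹ * f z) := LipschitzWith.of_le_add fun x y => by
      have := mul_le_mul_of_nonneg_left (h x y) (inv_nonneg.2 hK)
      rw [← mul_assoc, inv_mul_cancel₀ hK'.ne'] at this
      linarith
    have := le_ciSup (aux_bdd μ ν) ⟨_, hg⟩
    simp only [integral_const_mul] at this
    rw [← mul_sub] at this
    change _ ≤ dMK μ ν at this
    rwa [inv_mul_le_iff₀ hK'] at this

theorem aux_nonneg {α : Type*} [MetricSpace α] [CompactSpace α] [MeasurableSpace α] [BorelSpace α]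
    (μ ν : Measure α) [IsProbabilityMeasure μ] [IsProbabilityMeasure ν] : 0 ≤ dMK μ ν := by
  have := le_ciSup (aux_bdd μ ν) ⟨fun _ => 0, LipschitzWith.const' 0⟩
  simp only [integral_zero, sub_zero] at this
  exact this

theorem aux_ext {α : Type*} [MetricSpace α] [CompactSpace α] [MeasurableSpace α] [BorelSpace α]
    (μ ν : Measure α) [IsProbabilityMeasure μ] [IsProbabilityMeasure ν]
    (h : ∀ f : α → ℝ, LipschitzWith 1 f → ∫ z, f z ∂μ ≤ ∫ z, f z ∂ν) : μ = ν := by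
  have key : ∀ f : α → ℝ, ∀ K, LipschitzWith K f → ∫ z, f z ∂μ ≤ ∫ z, f z ∂ν := by
    intro f K hf
    have hg : LipschitzWith 1 (fun z => ((K : ℝ) + 1)⁻¹ * f z) :=
      LipschitzWith.of_le_add fun x y => by
      have h1 := hf.le_add_mul x y
      have hp : (0 : ℝ) < K + 1 := by positivity
      have h2 : f x ≤ f y + (K + 1) * dist x y := by
        nlinarith [dist_nonneg (x := x) (y := y)]
      have := mul_le_mul_of_nonneg_left h2 (inv_nonneg.2 hp.le)
      rwa [mul_add, ← mul_assoc, inv_mul_cancel₀ hp.ne', one_mul] at this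
    have := h _ hg
    simp only [integral_const_mul] at this
    exact le_of_mul_le_mul_left this (by positivity)
  let P : ProbabilityMeasure α := ⟨μ, inferInstance⟩
  let Q : ProbabilityMeasure α := ⟨ν, inferInstance⟩
  have ht : Tendsto (fun _ : ℕ => P) atTop (nhds Q) := by
    rw [tendsto_iff_forall_lipschitz_integral_tendsto]
    rintro f - ⟨K, hf⟩
    have h1 := key f K hf
    have h2 := key (fun z => - f z) K hf.neg
    rw [integral_neg, integral_neg] at h2
    have h3 : ∫ z, f z ∂μ = ∫ z, f z ∂ν := by linarith
    show Tendsto (fun _ => ∫ z, f z ∂μ) atTop (nhds (∫ z, f z ∂ν))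
    rw [h3]
    exact tendsto_const_nhds
  have : Q = P := tendsto_nhds_unique ht tendsto_const_nhds
  exact (congrArg Subtype.val this).symm

theorem aux_markov {X Λ : Type*} [MetricSpace X] [CompactSpace X] [MeasurableSpace X] [BorelSpace X]
    [MetricSpace Λ] [CompactSpace Λ] [MeasurableSpace Λ] [BorelSpace Λ]
    (τ : Λ → X → X) (hτ : Continuous fun p : Λ × X => τ p.1 p.2)
    (q : X → Measure Λ) (hq : ∀ x, IsProbabilityMeasure (q x))
    (hm : Measurable fun x => (q x).map fun l => τ l x)
    (μ : Measure X) [IsProbabilityMeasure μ] :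
    IsProbabilityMeasure (markovOp τ q μ) ∧ ∀ f : X → ℝ, Continuous f →
      ∫ z, f z ∂(markovOp τ q μ) = ∫ x, ∫ l, f (τ l x) ∂(q x) ∂μ := by
  have hc : ∀ x, Continuous fun l => τ l x := fun x =>
    hτ.comp (continuous_id.prodMk continuous_const)
  have hp : ∀ x, IsProbabilityMeasure ((q x).map fun l => τ l x) := fun x =>
    Measure.isProbabilityMeasure_map (hc x).measurable.aemeasurable
  have hP : IsProbabilityMeasure (markovOp τ q μ) :=
    isProbabilityMeasure_bind hm.aemeasurable (Eventually.of_forall hp)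
  refine ⟨hP, fun f hf => ?_⟩
  let η : ProbabilityTheory.Kernel X X := ⟨_, hm⟩
  have : ProbabilityTheory.IsMarkovKernel η := ⟨hp⟩
  have he : (η.comp (ProbabilityTheory.Kernel.const Unit μ)) () = markovOp τ q μ := by
    rw [ProbabilityTheory.Kernel.comp_apply]
    rfl
  have h := ProbabilityTheory.Kernel.integral_comp (η := η)
    (κ := ProbabilityTheory.Kernel.const Unit μ) (a := ()) (f := f)
    (by rw [he]; exact aux_int _ hf)
  rw [he] at h
  rw [h]
  refine integral_congr_ae (Eventually.of_forall fun x => ?_)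
  exact integral_map (hc x).measurable.aemeasurable hf.aestronglyMeasurable

/-- Stochastic stability: if each IFSm `(X, τ, q^(n))` satisfies M1, H2, H3 with constants
`s`, `r`, `t` such that `s + r·t < 1`, `q^(n)_x → q*_x` in `d_MK` uniformly in `x`, and
`μ^(n)` is the invariant measure of `T_{q^(n)}`, then `(X, τ, q*)` has a unique invariant
probability measure `μ*`, `d_MK(μ^(n), μ*) → 0`, and if `d_MK(q^(n)_x, q*_x) < ε` for all
`x` then `d_MK(μ^(n), μ*) ≤ r·ε / (1 − (r·t + s))`. -/
theorem stochastic_stability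
    {X Λ : Type*} [MetricSpace X] [CompactSpace X] [MeasurableSpace X] [BorelSpace X]
    [MetricSpace Λ] [CompactSpace Λ] [MeasurableSpace Λ] [BorelSpace Λ]
    (τ : Λ → X → X) (hτ : Continuous fun p : Λ × X => τ p.1 p.2)
    (qn : ℕ → X → Measure Λ) (hqn_prob : ∀ n x, IsProbabilityMeasure (qn n x))
    (hqn_meas : ∀ n, Measurable fun x => (qn n x).map fun l => τ l x)
    (qstar : X → Measure Λ) (hqstar_prob : ∀ x, IsProbabilityMeasure (qstar x))
    (hqstar_meas : Measurable fun x => (qstar x).map fun l => τ l x)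
    (s r t : ℝ) (hs : 0 < s) (hr : 0 ≤ r) (ht : 0 ≤ t) (hcontr : s + r * t < 1)
    (hM1 : ∀ (n : ℕ) (f : X → ℝ), LipschitzWith 1 f → ∀ x y : X,
      ∫ l, |f (τ l x) - f (τ l y)| ∂(qn n x) ≤ s * dist x y)
    (hH2 : ∀ (x : X) (l₁ l₂ : Λ), dist (τ l₁ x) (τ l₂ x) ≤ r * dist l₁ l₂)
    (hH3 : ∀ (n : ℕ) (x y : X), dMK (qn n x) (qn n y) ≤ t * dist x y)
    (hconv : ∀ ε : ℝ, 0 < ε → ∃ N : ℕ, ∀ n ≥ N, ∀ x : X, dMK (qn n x) (qstar x) < ε)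
    (μn : ℕ → Measure X) (hμn_prob : ∀ n, IsProbabilityMeasure (μn n))
    (hμn_inv : ∀ n, markovOp τ (qn n) (μn n) = μn n) :
    ∃ μstar : Measure X, IsProbabilityMeasure μstar ∧
      markovOp τ qstar μstar = μstar ∧
      (∀ ν : Measure X, IsProbabilityMeasure ν → markovOp τ qstar ν = ν → ν = μstar) ∧
      Tendsto (fun n => dMK (μn n) μstar) atTop (nhds 0) ∧
      ∀ (n : ℕ) (ε : ℝ), 0 < ε → (∀ x : X, dMK (qn n x) (qstar x) < ε) →
        dMK (μn n) μstar ≤ r * ε / (1 - (r * t + s)) := by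
  have hk0 : 0 ≤ s + r * t := by positivity
  have hk1 : 0 < 1 - (r * t + s) := by linarith
  have hcl : ∀ x, Continuous fun l => τ l x := fun x =>
    hτ.comp (continuous_id.prodMk continuous_const)
  -- comparison of the two operators
  have hcomp : ∀ (f : X → ℝ), LipschitzWith 1 f → ∀ (p p' : Measure Λ),
      IsProbabilityMeasure p → IsProbabilityMeasure p' → ∀ x,
      ∫ l, f (τ l x) ∂p - ∫ l, f (τ l x) ∂p' ≤ r * dMK p p' := by
    intro f hf p p' hp hp' x
    refine aux_le p p' hr fun l₁ l₂ => ?_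
    have h1 := hf.le_add_mul (τ l₁ x) (τ l₂ x)
    have h2 := hH2 x l₁ l₂
    simp at h1
    linarith
  have hcomp' : ∀ (f : X → ℝ), LipschitzWith 1 f → ∀ (p p' : Measure Λ),
      IsProbabilityMeasure p → IsProbabilityMeasure p' → ∀ x,
      ∫ l, f (τ l x) ∂p' - ∫ l, f (τ l x) ∂p ≤ r * dMK p p' := by
    intro f hf p p' hp hp' x
    have := hcomp (fun z => - f z) hf.neg p p' hp hp' x
    simp only [integral_neg] at this
    linarith
  have hBn : ∀ (n : ℕ) (f : X → ℝ), LipschitzWith 1 f → ∀ x y,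
      ∫ l, f (τ l x) ∂(qn n x) - ∫ l, f (τ l y) ∂(qn n y) ≤ (s + r * t) * dist x y := by
    intro n f hf x y
    have := hqn_prob n
    have i1 : Integrable (fun l => f (τ l x)) (qn n x) :=
      aux_int _ (hf.continuous.comp (hcl x))
    have i2 : Integrable (fun l => f (τ l y)) (qn n x) :=
      aux_int _ (hf.continuous.comp (hcl y))
    have h1 : ∫ l, f (τ l x) ∂(qn n x) - ∫ l, f (τ l y) ∂(qn n x) ≤ s * dist x y := by
      rw [← integral_sub i1 i2]
      exact (integral_mono (i1.sub i2) (i1.sub i2).abs fun l => le_abs_self _).trans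
        (hM1 n f hf x y)
    have h2 := hcomp f hf (qn n x) (qn n y) (this x) (this y) y
    have h3 := mul_le_mul_of_nonneg_left (hH3 n x y) hr
    linarith
  have hBs : ∀ (f : X → ℝ), LipschitzWith 1 f → ∀ x y,
      ∫ l, f (τ l x) ∂(qstar x) - ∫ l, f (τ l y) ∂(qstar y) ≤ (s + r * t) * dist x y := by
    intro f hf x y
    refine le_of_forall_pos_le_add fun δ hδ => ?_
    obtain ⟨N, hN⟩ := hconv (δ / (2 * (r + 1))) (by positivity)
    have h1 := hcomp' f hf (qn N x) (qstar x) (hqn_prob N x) (hqstar_prob x) x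
    have h2 := hcomp f hf (qn N y) (qstar y) (hqn_prob N y) (hqstar_prob y) y
    have h3 := hBn N f hf x y
    have h4 := mul_le_mul_of_nonneg_left (hN N le_rfl x).le hr
    have h5 := mul_le_mul_of_nonneg_left (hN N le_rfl y).le hr
    have h6 : r * (δ / (2 * (r + 1))) ≤ δ / 2 := by
      rw [mul_div_assoc', div_le_div_iff₀ (by positivity) (by positivity)]
      nlinarith
    linarith
  have hcBn : ∀ (n : ℕ) (f : X → ℝ), LipschitzWith 1 f →
      Continuous fun x => ∫ l, f (τ l x) ∂(qn n x) := fun n f hf =>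
    (aux_lip hk0 (hBn n f hf)).continuous
  have hcBs : ∀ (f : X → ℝ), LipschitzWith 1 f →
      Continuous fun x => ∫ l, f (τ l x) ∂(qstar x) := fun f hf =>
    (aux_lip hk0 (hBs f hf)).continuous
  have hμint : ∀ n (f : X → ℝ), LipschitzWith 1 f →
      ∫ z, f z ∂(μn n) = ∫ x, ∫ l, f (τ l x) ∂(qn n x) ∂(μn n) := by
    intro n f hf
    have := hμn_prob n
    have h := (aux_markov τ hτ (qn n) (hqn_prob n) (hqn_meas n) (μn n)).2 f hf.continuous
    rwa [hμn_inv n] at h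
  -- averaged comparison
  have havg : ∀ n (f : X → ℝ), LipschitzWith 1 f → ∀ ε,
      (∀ x : X, dMK (qn n x) (qstar x) < ε) →
      ∫ z, f z ∂(μn n) - ∫ x, ∫ l, f (τ l x) ∂(qstar x) ∂(μn n) ≤ r * ε := by
    intro n f hf ε hε
    have := hμn_prob n
    rw [hμint n f hf, ← integral_sub (aux_int _ (hcBn n f hf)) (aux_int _ (hcBs f hf))]
    have h1 : ∫ x, (∫ l, f (τ l x) ∂(qn n x) - ∫ l, f (τ l x) ∂(qstar x)) ∂(μn n)
        ≤ ∫ _x, r * ε ∂(μn n) :=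
      integral_mono (aux_int _ ((hcBn n f hf).sub (hcBs f hf))) (integrable_const _) fun x =>
        (hcomp f hf _ _ (hqn_prob n x) (hqstar_prob x) x).trans
          (mul_le_mul_of_nonneg_left (hε x).le hr)
    simpa using h1
  -- existence
  have hex : ∃ μ : Measure X, IsProbabilityMeasure μ ∧ markovOp τ qstar μ = μ := by
    let P : ℕ → ProbabilityMeasure X := fun n => ⟨μn n, hμn_prob n⟩
    let F : Ultrafilter ℕ := Ultrafilter.of atTop
    have hF : (F : Filter ℕ) ≤ atTop := Ultrafilter.of_le _
    obtain ⟨P0, -, hP0⟩ := (isCompact_univ (X := ProbabilityMeasure X)).ultrafilter_le_nhds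
      (F.map P) (by simp)
    have hT : Tendsto P F (nhds P0) := hP0
    rw [ProbabilityMeasure.tendsto_iff_forall_integral_tendsto] at hT
    have hT' : ∀ f : X → ℝ, Continuous f →
        Tendsto (fun n => ∫ z, f z ∂(μn n)) F (nhds (∫ z, f z ∂(P0 : Measure X))) :=
      fun f hf => hT (BoundedContinuousFunction.mkOfCompact ⟨f, hf⟩)
    have hM := aux_markov τ hτ qstar hqstar_prob hqstar_meas (P0 : Measure X)
    have := hM.1
    refine ⟨P0, inferInstance, (aux_ext _ _ fun f hf => ?_).symm⟩
    rw [hM.2 f hf.continuous]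
    have hl := (hT' f hf.continuous).sub (hT' _ (hcBs f hf))
    rw [← sub_nonpos]
    refine le_of_forall_pos_le_add fun δ hδ => ?_
    refine le_of_tendsto hl (hF ?_)
    obtain ⟨N, hN⟩ := hconv (δ / (r + 1)) (by positivity)
    filter_upwards [eventually_ge_atTop N] with n hn
    have h1 := havg n f hf _ (hN n hn)
    have h6 : r * (δ / (r + 1)) ≤ δ := by
      rw [mul_div_assoc', div_le_iff₀ (by positivity)]
      nlinarith
    linarith
  obtain ⟨μ, hμ, hμi⟩ := hex
  have hstar : ∀ ν : Measure X, IsProbabilityMeasure ν → markovOp τ qstar ν = ν →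
      ∀ f : X → ℝ, LipschitzWith 1 f →
      ∫ z, f z ∂ν = ∫ x, ∫ l, f (τ l x) ∂(qstar x) ∂ν := by
    intro ν hν hi f hf
    have h := (aux_markov τ hτ qstar hqstar_prob hqstar_meas ν).2 f hf.continuous
    rwa [hi] at h
  have : Nonempty {f : X → ℝ // LipschitzWith 1 f} := ⟨⟨fun _ => 0, LipschitzWith.const' 0⟩⟩
  have hest : ∀ (n : ℕ) (ε : ℝ), 0 < ε → (∀ x : X, dMK (qn n x) (qstar x) < ε) →
      dMK (μn n) μ ≤ r * ε / (1 - (r * t + s)) := by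
    intro n ε _ hε
    have := hμn_prob n
    have h : dMK (μn n) μ ≤ r * ε + (s + r * t) * dMK (μn n) μ := by
      refine ciSup_le fun ⟨f, hf⟩ => ?_
      have h1 := havg n f hf ε hε
      have h2 := aux_le (μn n) μ hk0 (hBs f hf)
      have h3 := hstar μ hμ hμi f hf
      show ∫ z, f z ∂(μn n) - ∫ z, f z ∂μ ≤ _
      linarith
    rw [le_div_iff₀ hk1]
    linarith
  refine ⟨μ, hμ, hμi, ?_, ?_, hest⟩
  · intro ν hν hi
    have h : dMK ν μ ≤ (s + r * t) * dMK ν μ := by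
      refine ciSup_le fun ⟨f, hf⟩ => ?_
      have h2 := aux_le ν μ hk0 (hBs f hf)
      have h3 := hstar μ hμ hμi f hf
      have h4 := hstar ν hν hi f hf
      show ∫ z, f z ∂ν - ∫ z, f z ∂μ ≤ _
      linarith
    have h0 : dMK ν μ ≤ 0 := by nlinarith
    refine aux_ext _ _ fun f hf => ?_
    have h5 := le_ciSup (aux_bdd ν μ) ⟨f, hf⟩
    change ∫ z, f z ∂ν - ∫ z, f z ∂μ ≤ dMK ν μ at h5
    linarith
  · rw [Metric.tendsto_atTop]
    intro δ hδ
    obtain ⟨N, hN⟩ := hconv (δ * (1 - (r * t + s)) / (r + 1)) (by positivity)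
    refine ⟨N, fun n hn => ?_⟩
    have := hμn_prob n
    rw [Real.dist_eq, sub_zero, abs_of_nonneg (aux_nonneg _ _)]
    refine (hest n _ (by positivity) (hN n hn)).trans_lt ?_
    rw [div_lt_iff₀ hk1, mul_div_assoc', div_lt_iff₀ (by positivity)]
    nlinarith [mul_pos hδ hk1]
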